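/- Set Q_0 = 242(θ−1)²θ⁶; Q_1 = −11θ²(1615θ⁶ − 4845θ⁵ + 4598θ⁴ + 1640θ³ + 1370θ² + 550θ + 88); Q_2 = 103968θ⁸ − 415872θ⁷ + 1108270θ⁶ + 662150θ⁵ + 2273θ⁴ − 230318θ³ − 24299θ² + 61468θ + 19360; Q_3 = −3950784θ⁶ + 4345395θ⁴ + 1309385θ³ − 2484702θ² − 1988272θ − 440880; Q_4 = 4(233928θ⁴ + 467856θ³ + 664544θ² + 587366θ + 156697); Q_5 = −1216(1368θ² + 2736θ − 479); Q_6 = −6653952, and P(q,θ) = Σ_{d=0}^{6} q^d Q_d(θ) ∏_{m=1}^{d}(θ+m)². Let r(q) = 32768q⁵ − 225280q⁴ + 619520q³ − 851840q² + 585640q − 161051 (invertible in ℚ[[q]] since r(0) = −161051 ≠ 0), R_4(q,θ) = 103968q²(8q−11)³θ⁴ − 415872q²(8q−11)²(20q−11)θ³ + 19q(8q−11)(12957696q³ − 11215424q² + 2923360q − 113135)θ² − 57q(56033280q⁴ − 48468992q³ + 5056832q² − 3620320q + 1244485)θ + 2(958169088q⁵ + 892286208q⁴ − 67694176q³ − 91902888q²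 + 27891105q − 161051), and S_4(q,θ) = 121θ⁴ − 11q(434θ⁴+820θ³+685θ²+275θ+44) + q²(7841θ⁴+10916θ³+3133θ²−2486θ−1320) − 4q³(1488θ⁴+4092θ³+6761θ²+5511θ+1694) − 32q⁴(136θ⁴+1460θ³+4556θ²+5245θ+2017) + 256q⁵(θ+1)²(40θ²+212θ+237) − 4096q⁶(θ+1)²(θ+2)². Then for every f ∈ ℚ[[q]] one has P(q,θ) f = θ²((θ−1)²(r(q)^{−1} · R_4(q,θ)(S_4(q,θ) f))), i.e. P factors as the composition θ² ∘ (θ−1)² ∘ (multiplication by r(q)^{−1}) ∘ R_4 ∘ S_4 of operators on ℚ[[q]]. -/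

import Mathlib

noncomputable section
namespace Stmt2

open PowerSeries

/-- The Euler operator `θ = q·d/dq` on `ℚ[[q]]`. -/
def th (f : PowerSeries ℚ) : PowerSeries ℚ :=
  PowerSeries.mk fun d => (d : ℚ) * PowerSeries.coeff d f

/-- `(θ + m)` applied to a power series, for a rational constant `m`. -/
def sh (m : ℚ) (f : PowerSeries ℚ) : PowerSeries ℚ := th f + C m * f

/-- `∏_{m=1}^{d} (θ+m)²` applied to a power series. -/
def prodOp : ℕ → PowerSeries ℚ → PowerSeries ℚ
  | 0, f => f
  | (n + 1), f => sh ((n : ℚ) + 1) (sh ((n : ℚ) + 1) (prodOp n f))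

/-- `Q₀(θ) = 242(θ−1)²θ⁶` applied. -/
def Q0op (f : PowerSeries ℚ) : PowerSeries ℚ :=
  242 * ((fun g => th g - g) ((fun g => th g - g) (th^[6] f)))

/-- `Q₁(θ) = −11θ²(1615θ⁶ − 4845θ⁵ + 4598θ⁴ + 1640θ³ + 1370θ² + 550θ + 88)` applied. -/
def Q1op (f : PowerSeries ℚ) : PowerSeries ℚ :=
  -11 * th (th (1615 * th^[6] f - 4845 * th^[5] f + 4598 * th^[4] f + 1640 * th^[3] f +
    1370 * th^[2] f + 550 * th f + 88 * f))

/-- `Q₂(θ)` applied. -/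
def Q2op (f : PowerSeries ℚ) : PowerSeries ℚ :=
  103968 * th^[8] f - 415872 * th^[7] f + 1108270 * th^[6] f + 662150 * th^[5] f +
    2273 * th^[4] f - 230318 * th^[3] f - 24299 * th^[2] f + 61468 * th f + 19360 * f

/-- `Q₃(θ)` applied. -/
def Q3op (f : PowerSeries ℚ) : PowerSeries ℚ :=
  -3950784 * th^[6] f + 4345395 * th^[4] f + 1309385 * th^[3] f - 2484702 * th^[2] f -
    1988272 * th f - 440880 * f

/-- `Q₄(θ)` applied. -/
def Q4op (f : PowerSeries ℚ) : PowerSeries ℚ :=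
  4 * (233928 * th^[4] f + 467856 * th^[3] f + 664544 * th^[2] f + 587366 * th f + 156697 * f)

/-- `Q₅(θ)` applied. -/
def Q5op (f : PowerSeries ℚ) : PowerSeries ℚ :=
  -1216 * (1368 * th^[2] f + 2736 * th f - 479 * f)

/-- `Q₆(θ)` applied. -/
def Q6op (f : PowerSeries ℚ) : PowerSeries ℚ := -6653952 * f

/-- `P(q,θ) = Σ_{d=0}^{6} q^d Q_d(θ) ∏_{m=1}^{d}(θ+m)²` applied. -/
def Pop (f : PowerSeries ℚ) : PowerSeries ℚ :=
  Q0op (prodOp 0 f) + X * Q1op (prodOp 1 f) + X ^ 2 * Q2op (prodOp 2 f) +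
    X ^ 3 * Q3op (prodOp 3 f) + X ^ 4 * Q4op (prodOp 4 f) + X ^ 5 * Q5op (prodOp 5 f) +
    X ^ 6 * Q6op (prodOp 6 f)

/-- `r(q) = 32768q⁵ − 225280q⁴ + 619520q³ − 851840q² + 585640q − 161051`. -/
def rq : PowerSeries ℚ :=
  32768 * X ^ 5 - 225280 * X ^ 4 + 619520 * X ^ 3 - 851840 * X ^ 2 + 585640 * X - 161051

/-- `R₄(q,θ)` applied. -/
def R4op (f : PowerSeries ℚ) : PowerSeries ℚ :=
  103968 * X ^ 2 * (8 * X - 11) ^ 3 * th^[4] f -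
    415872 * X ^ 2 * (8 * X - 11) ^ 2 * (20 * X - 11) * th^[3] f +
    19 * X * (8 * X - 11) *
      (12957696 * X ^ 3 - 11215424 * X ^ 2 + 2923360 * X - 113135) * th^[2] f -
    57 * X * (56033280 * X ^ 4 - 48468992 * X ^ 3 + 5056832 * X ^ 2 - 3620320 * X + 1244485) *
      th f +
    2 * (958169088 * X ^ 5 + 892286208 * X ^ 4 - 67694176 * X ^ 3 - 91902888 * X ^ 2 +
      27891105 * X - 161051) * f

/-- `S₄(q,θ)` (the Picard–Fuchs operator of Calabi–Yau No. 25) applied. -/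
def S4op (f : PowerSeries ℚ) : PowerSeries ℚ :=
  121 * th^[4] f -
    11 * X * (434 * th^[4] f + 820 * th^[3] f + 685 * th^[2] f + 275 * th f + 44 * f) +
    X ^ 2 * (7841 * th^[4] f + 10916 * th^[3] f + 3133 * th^[2] f - 2486 * th f - 1320 * f) -
    4 * X ^ 3 * (1488 * th^[4] f + 4092 * th^[3] f + 6761 * th^[2] f + 5511 * th f + 1694 * f) -
    32 * X ^ 4 * (136 * th^[4] f + 1460 * th^[3] f + 4556 * th^[2] f + 5245 * th f + 2017 * f) +
    256 * X ^ 5 * (sh 1 (sh 1 (40 * th^[2] f + 212 * th f + 237 * f))) -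
    4096 * X ^ 6 * (sh 1 (sh 1 (sh 2 (sh 2 f))))

/-!
In the Weyl algebra `p(θ) q^d = q^d p(θ + d)`, so operators written with powers of `q` on the left
compose by shifting symbols and multiplying them. For `d ≥ 2` the product `∏_{m=1}^{d} (θ+m)²`
contains `(θ+d)² (θ+d-1)²`, and `Q_0`, `Q_1` supply the missing factors for `d = 0, 1`; hence
`θ² (θ-1)²` can be pulled out of `P` on the left. What remains, `r · (quotient) = R_4 ∘ S_4`, is an
identity between commutative polynomials in `q` and `θ`.
-/

section NormalOp

open Polynomial hiding X C

variable {R A : Type*} [CommRing R] [CommRing A] [Algebra R A]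

/-- The differential operator `∑ aₖ Dᵏ` with symbol `∑ aₖ Tᵏ`, the coefficients being multiplied on
the left of the powers of `D`. -/
def normalOp (D : Module.End R A) : A[X] →ₗ[A] Module.End R A :=
  Polynomial.lsum fun k => LinearMap.toSpanSingleton A (Module.End R A) (D ^ k)

theorem normalOp_monomial (D : Module.End R A) (k : ℕ) (a : A) :
    normalOp D (Polynomial.monomial k a) = a • D ^ k := by
  simp [normalOp, Polynomial.lsum_apply, Polynomial.sum_monomial_index]

theorem normalOp_C_mul (D : Module.End R A) (a : A) (L : A[X]) :
    normalOp D (Polynomial.C a * L) = a • normalOp D L := by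
  rw [← Polynomial.smul_eq_C_mul, map_smul]

theorem normalOp_map (D : Module.End R A) (p : R[X]) :
    normalOp D (p.map (algebraMap R A)) = aeval D p := by
  induction p using Polynomial.induction_on' with
  | add p r hp hr => rw [Polynomial.map_add, map_add, map_add, hp, hr]
  | monomial k c =>
    rw [Polynomial.map_monomial, normalOp_monomial, aeval_monomial, algebraMap_smul,
      ← Algebra.smul_def]

theorem normalOp_X_pow (D : Module.End R A) (k : ℕ) :
    normalOp D (Polynomial.X ^ k) = D ^ k := by
  rw [Polynomial.X_pow_eq_monomial, normalOp_monomial, one_smul]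

theorem normalOp_X (D : Module.End R A) : normalOp D Polynomial.X = D := by
  simpa using normalOp_X_pow D 1

theorem normalOp_C (D : Module.End R A) (a : A) : normalOp D (Polynomial.C a) = a • 1 := by
  rw [← Polynomial.monomial_zero_left, normalOp_monomial, pow_zero]

theorem normalOp_mul_map (D : Module.End R A) (L : A[X]) (p : R[X]) :
    normalOp D (L * p.map (algebraMap R A)) = normalOp D L * aeval D p := by
  induction L using Polynomial.induction_on' with
  | add L M hL hM => rw [add_mul, map_add, map_add, add_mul, hL, hM]
  | monomial k a =>
    have collect : Polynomial.monomial k a * p.map (algebraMap R A) =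
        Polynomial.C a * (Polynomial.X ^ k * p).map (algebraMap R A) := by
      rw [Polynomial.map_mul, Polynomial.map_pow, Polynomial.map_X, ← mul_assoc,
        Polynomial.C_mul_X_pow_eq_monomial]
    rw [collect, normalOp_C_mul, normalOp_map, map_mul, map_pow, aeval_X, normalOp_monomial,
      smul_mul_assoc]

theorem aeval_ofNat_apply (D : Module.End R A) (n : ℕ) [n.AtLeastTwo] (f : A) :
    aeval D (ofNat(n) : R[X]) f = ofNat(n) * f := by
  rw [map_ofNat, Module.End.ofNat_apply, ofNat_smul_eq_nsmul, nsmul_eq_mul, Nat.cast_ofNat]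

variable (D : Derivation R A A) {y : A} {c : R}

/-- For `D = q·d/dq` and `y = qⁿ` this is the commutation relation of the Weyl algebra. -/
theorem semiconjBy_mulLeft_eigenvector (hy : D y = c • y) :
    SemiconjBy (LinearMap.mulLeft R y) (D + algebraMap R (Module.End R A) c) D := by
  ext f
  change y * (D f + c • f) = D (y * f)
  rw [Derivation.leibniz, hy, smul_eq_mul, smul_eq_mul, mul_add, mul_smul_comm, mul_smul_comm,
    mul_comm f y]

theorem normalOp_eigenvector_mul (hy : D y = c • y) (L : A[X]) (f : A) :
    normalOp (D : Module.End R A) L (y * f) =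
      y * normalOp (D : Module.End R A) (taylor (algebraMap R A c) L) f := by
  induction L using Polynomial.induction_on' with
  | add L M hL hM => simp only [map_add, LinearMap.add_apply, hL, hM, mul_add]
  | monomial k a =>
    have shift : (Polynomial.X + Polynomial.C (algebraMap R A c)) ^ k =
        ((Polynomial.X + Polynomial.C c) ^ k).map (algebraMap R A) := by simp
    have commute := LinearMap.congr_fun ((semiconjBy_mulLeft_eigenvector D hy).pow_right k) f
    rw [Module.End.mul_apply, Module.End.mul_apply, LinearMap.mulLeft_apply,
      LinearMap.mulLeft_apply] at commute
    rw [normalOp_monomial, taylor_monomial, normalOp_C_mul, shift, normalOp_map, map_pow, map_add,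
      aeval_X, aeval_C, LinearMap.smul_apply, LinearMap.smul_apply, smul_eq_mul, smul_eq_mul,
      ← commute, mul_left_comm]

theorem aeval_eigenvector_mul (hy : D y = c • y) (p : R[X]) (f : A) :
    aeval (D : Module.End R A) p (y * f) = y * aeval (D : Module.End R A) (taylor c p) f := by
  rw [← normalOp_map, normalOp_eigenvector_mul D hy, ← map_taylor, normalOp_map]

end NormalOp

section Euler

open Polynomial hiding X C

variable (R : Type*) [CommRing R]

/-- The Euler derivation `X · d/dX` of `R⟦X⟧`. -/
def euler : Derivation R R⟦X⟧ R⟦X⟧ := (X : R⟦X⟧) • derivative R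

local notation "θ[" R "]" => Derivation.toLinearMap (euler R)

variable {R}

theorem euler_X_pow (n : ℕ) : euler R (X ^ n) = (n : R) • X ^ n := by
  rcases n with - | n
  · simp
  · rw [euler, Derivation.smul_apply, Derivation.leibniz_pow, PowerSeries.derivative_X,
      Nat.add_sub_cancel, Nat.cast_smul_eq_nsmul]
    simp only [smul_eq_mul, nsmul_eq_mul, mul_one, pow_succ]
    ring

theorem th_apply (f : ℚ⟦X⟧) : th f = euler ℚ f := by
  ext d
  cases d <;> simp [th, euler, coeff_succ_X_mul, PowerSeries.coeff_derivative, mul_comm]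

/-- The operator `∑_{d < n} X^d P_d(θ)` on `R⟦X⟧`. -/
def eulerOp (n : ℕ) (P : ℕ → R[X]) : Module.End R R⟦X⟧ :=
  ∑ d ∈ Finset.range n, (X ^ d : R⟦X⟧) • aeval θ[R] (P d)

theorem eulerOp_apply (n : ℕ) (P : ℕ → R[X]) (f : R⟦X⟧) :
    eulerOp n P f = ∑ d ∈ Finset.range n, X ^ d * aeval θ[R] (P d) f := by
  simp [eulerOp]

theorem aeval_eulerOp (p : R[X]) (n : ℕ) (P : ℕ → R[X]) (f : R⟦X⟧) :
    aeval θ[R] p (eulerOp n P f) = eulerOp n (fun d => taylor (d : R) p * P d) f := by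
  simp_rw [eulerOp_apply, map_sum, aeval_eigenvector_mul (euler R) (euler_X_pow _), map_mul,
    Module.End.mul_apply]

theorem eulerOp_eq_normalOp (n : ℕ) (P : ℕ → R[X]) :
    eulerOp n P = normalOp θ[R]
      (∑ d ∈ Finset.range n, Polynomial.C (X ^ d) * (P d).map (algebraMap R R⟦X⟧)) := by
  simp_rw [eulerOp, map_sum, normalOp_C_mul, normalOp_map]

theorem normalOp_eulerOp (L : R⟦X⟧[X]) (n : ℕ) (P : ℕ → R[X]) (f : R⟦X⟧) :
    normalOp θ[R] L (eulerOp n P f) = normalOp θ[R] (∑ d ∈ Finset.range n,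
      Polynomial.C (X ^ d) * (taylor (d : R⟦X⟧) L * (P d).map (algebraMap R R⟦X⟧))) f := by
  simp_rw [eulerOp_apply, map_sum, normalOp_eigenvector_mul (euler R) (euler_X_pow _), map_natCast,
    normalOp_C_mul, normalOp_mul_map, LinearMap.sum_apply, LinearMap.smul_apply, smul_eq_mul,
    Module.End.mul_apply]

end Euler

section Symbols

open Polynomial hiding X C

local notation "T" => Polynomial.X
local notation "θ" => Derivation.toLinearMap (euler ℚ)

theorem iterate_th (k : ℕ) (f : ℚ⟦X⟧) : th^[k] f = (θ ^ k) f := by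
  rw [Module.End.pow_apply, funext th_apply]; rfl

theorem sh_apply (m : ℚ) (f : ℚ⟦X⟧) : sh m f = aeval θ (T + Polynomial.C m) f := by
  simp [sh, th_apply, PowerSeries.smul_eq_C_mul]

theorem sh_sh_apply (m : ℚ) (f : ℚ⟦X⟧) : sh m (sh m f) = aeval θ ((T + Polynomial.C m) ^ 2) f := by
  rw [sh_apply, sh_apply, sq, map_mul, Module.End.mul_apply]

/-- The polynomial `∏_{m=1}^{d} (T + m)²`, the symbol of `prodOp d`. -/
def risingSq (d : ℕ) : ℚ[X] := ∏ m ∈ Finset.range d, (T + Polynomial.C ((m : ℚ) + 1)) ^ 2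

theorem prodOp_apply (d : ℕ) (f : ℚ⟦X⟧) : prodOp d f = aeval θ (risingSq d) f := by
  induction d with
  | zero => simp [prodOp, risingSq]
  | succ d h =>
    rw [prodOp, sh_sh_apply, h, risingSq, risingSq, Finset.prod_range_succ, mul_comm, map_mul,
      Module.End.mul_apply]

/-- The coefficients `Q_d` of the operator `P(q,θ)`, as polynomials in `T = θ`; `Q_d = 0` for
`d > 6`. -/
def Q : ℕ → ℚ[X]
  | 0 => 242 * ((T - 1) ^ 2 * T ^ 6)
  | 1 => -11 * (T ^ 2 * (1615 * T ^ 6 - 4845 * T ^ 5 + 4598 * T ^ 4 + 1640 * T ^ 3 + 1370 * T ^ 2 +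
      550 * T + 88))
  | 2 => 103968 * T ^ 8 - 415872 * T ^ 7 + 1108270 * T ^ 6 + 662150 * T ^ 5 + 2273 * T ^ 4 -
      230318 * T ^ 3 - 24299 * T ^ 2 + 61468 * T + 19360
  | 3 => -3950784 * T ^ 6 + 4345395 * T ^ 4 + 1309385 * T ^ 3 - 2484702 * T ^ 2 - 1988272 * T -
      440880
  | 4 => 4 * (233928 * T ^ 4 + 467856 * T ^ 3 + 664544 * T ^ 2 + 587366 * T + 156697)
  | 5 => -1216 * (1368 * T ^ 2 + 2736 * T - 479)
  | 6 => -6653952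
  | _ => 0

/-- The symbol of the left factor `θ²(θ-1)²` of `P(q,θ)`. -/
def leftFactor : ℚ[X] := T ^ 2 * (T - 1) ^ 2

theorem aeval_leftFactor (f : ℚ⟦X⟧) :
    aeval θ leftFactor f = th (th ((fun g => th g - g) ((fun g => th g - g) f))) := by
  simp [leftFactor, sq, th_apply]

/-- The coefficients of the quotient of `P(q,θ)` by its left factor `θ²(θ-1)²`: the coefficient
`Q_d(θ) ∏_{m=1}^{d} (θ+m)²` of `q^d` in `P`, divided by `(θ+d)²(θ+d-1)²`. -/
def quotientCoeff : ℕ → ℚ[X]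
  | 0 => 242 * T ^ 4
  | 1 => -11 * (1615 * T ^ 6 - 4845 * T ^ 5 + 4598 * T ^ 4 + 1640 * T ^ 3 + 1370 * T ^ 2 +
      550 * T + 88)
  | d + 2 => Q (d + 2) * risingSq d

theorem taylor_leftFactor (a : ℚ) :
    taylor a leftFactor = (T + Polynomial.C a) ^ 2 * (T + Polynomial.C (a - 1)) ^ 2 := by
  simp only [leftFactor, taylor_mul, taylor_pow, taylor_X, map_sub, taylor_one, Polynomial.C_1]
  ring

theorem risingSq_add_two (d : ℕ) :
    risingSq (d + 2) = taylor ((d + 2 : ℕ) : ℚ) leftFactor * risingSq d := by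
  rw [taylor_leftFactor, risingSq, Finset.prod_range_succ, Finset.prod_range_succ, ← risingSq]
  push_cast
  ring_nf

theorem Q_mul_risingSq : (d : ℕ) → Q d * risingSq d = taylor (d : ℚ) leftFactor * quotientCoeff d
  | 0 => by
    simp only [Q, quotientCoeff, risingSq, Finset.prod_range_zero, Nat.cast_zero, taylor_zero,
      leftFactor]
    ring
  | 1 => by
    simp only [Q, quotientCoeff, risingSq, Finset.prod_range_one, taylor_leftFactor, Nat.cast_zero,
      Nat.cast_one, zero_add, sub_self, map_zero, map_one]
    ring
  | d + 2 => by rw [risingSq_add_two, quotientCoeff, mul_left_comm]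

theorem Q0op_apply (f : ℚ⟦X⟧) : Q0op f = aeval θ (Q 0) f := by
  simp [Q0op, Q, iterate_th, th_apply, aeval_ofNat_apply, sq (θ - 1), mul_sub]

theorem Q1op_apply (f : ℚ⟦X⟧) : Q1op f = aeval θ (Q 1) f := by
  simp [Q1op, Q, iterate_th, th_apply, aeval_ofNat_apply, sq θ, mul_add, mul_sub,
    -Derivation.leibniz]

theorem Q2op_apply (f : ℚ⟦X⟧) : Q2op f = aeval θ (Q 2) f := by
  simp [Q2op, Q, iterate_th, th_apply, aeval_ofNat_apply]

theorem Q3op_apply (f : ℚ⟦X⟧) : Q3op f = aeval θ (Q 3) f := by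
  simp [Q3op, Q, iterate_th, th_apply, aeval_ofNat_apply]

theorem Q4op_apply (f : ℚ⟦X⟧) : Q4op f = aeval θ (Q 4) f := by
  simp [Q4op, Q, iterate_th, th_apply, aeval_ofNat_apply, mul_add]

theorem Q5op_apply (f : ℚ⟦X⟧) : Q5op f = aeval θ (Q 5) f := by
  simp [Q5op, Q, iterate_th, th_apply, aeval_ofNat_apply, mul_add, mul_sub]

theorem Q6op_apply (f : ℚ⟦X⟧) : Q6op f = aeval θ (Q 6) f := by
  simp [Q6op, Q, aeval_ofNat_apply]

theorem Pop_apply (f : ℚ⟦X⟧) : Pop f = eulerOp 7 (fun d => Q d * risingSq d) f := by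
  simp only [Pop, eulerOp_apply, Finset.sum_range_succ, Finset.sum_range_zero, Q0op_apply,
    Q1op_apply, Q2op_apply, Q3op_apply, Q4op_apply, Q5op_apply, Q6op_apply, prodOp_apply, map_mul,
    Module.End.mul_apply, pow_zero, pow_one, one_mul, zero_add]

theorem Pop_eq_leftFactor_quotient (f : ℚ⟦X⟧) :
    Pop f = aeval θ leftFactor (eulerOp 7 quotientCoeff f) := by
  rw [Pop_apply, aeval_eulerOp, funext Q_mul_risingSq]

/-- The coefficients of `S_4(q,θ)` with respect to `q`, as polynomials in `T = θ`; they vanish in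
degree `d > 6`. -/
def S4Coeff : ℕ → ℚ[X]
  | 0 => 121 * T ^ 4
  | 1 => -11 * (434 * T ^ 4 + 820 * T ^ 3 + 685 * T ^ 2 + 275 * T + 44)
  | 2 => 7841 * T ^ 4 + 10916 * T ^ 3 + 3133 * T ^ 2 - 2486 * T - 1320
  | 3 => -4 * (1488 * T ^ 4 + 4092 * T ^ 3 + 6761 * T ^ 2 + 5511 * T + 1694)
  | 4 => -32 * (136 * T ^ 4 + 1460 * T ^ 3 + 4556 * T ^ 2 + 5245 * T + 2017)
  | 5 => 256 * ((T + 1) ^ 2 * (40 * T ^ 2 + 212 * T + 237))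
  | 6 => -4096 * ((T + 1) ^ 2 * (T + 2) ^ 2)
  | _ => 0

theorem S4op_apply (f : ℚ⟦X⟧) : S4op f = eulerOp 7 S4Coeff f := by
  simp only [eulerOp_apply, Finset.sum_range_succ, Finset.sum_range_zero, S4op, S4Coeff,
    sh_sh_apply, iterate_th, th_apply, map_ofNat (Polynomial.C : ℚ →+* ℚ[X]), map_one, map_add,
    map_sub, map_neg, map_mul, map_pow, aeval_X, aeval_ofNat_apply, LinearMap.add_apply,
    LinearMap.sub_apply, LinearMap.neg_apply, Module.End.mul_apply, Derivation.coeFn_coe]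
  ring

/-- The symbol of `R_4(q,θ)`, a polynomial in `T = θ` over `ℚ⟦q⟧`. -/
def R4Symbol : ℚ⟦X⟧[X] :=
  Polynomial.C (103968 * X ^ 2 * (8 * X - 11) ^ 3) * T ^ 4 -
    Polynomial.C (415872 * X ^ 2 * (8 * X - 11) ^ 2 * (20 * X - 11)) * T ^ 3 +
    Polynomial.C (19 * X * (8 * X - 11) *
      (12957696 * X ^ 3 - 11215424 * X ^ 2 + 2923360 * X - 113135)) * T ^ 2 -
    Polynomial.C (57 * X * (56033280 * X ^ 4 - 48468992 * X ^ 3 + 5056832 * X ^ 2 - 3620320 * X +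
      1244485)) * T +
    Polynomial.C (2 * (958169088 * X ^ 5 + 892286208 * X ^ 4 - 67694176 * X ^ 3 -
      91902888 * X ^ 2 + 27891105 * X - 161051))

theorem R4op_apply (f : ℚ⟦X⟧) : R4op f = normalOp θ R4Symbol f := by
  simp only [R4op, R4Symbol, map_add, map_sub, LinearMap.add_apply, LinearMap.sub_apply, normalOp_C,
    normalOp_X, normalOp_C_mul, normalOp_X_pow, LinearMap.smul_apply, smul_eq_mul,
    Module.End.one_apply, Derivation.coeFn_coe, iterate_th, th_apply]

theorem C_rq_mul_quotient_symbol :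
    Polynomial.C rq * ∑ d ∈ Finset.range 7,
        Polynomial.C (X ^ d) * (quotientCoeff d).map (algebraMap ℚ ℚ⟦X⟧) =
      ∑ d ∈ Finset.range 7, Polynomial.C (X ^ d) *
        (taylor (d : ℚ⟦X⟧) R4Symbol * (S4Coeff d).map (algebraMap ℚ ℚ⟦X⟧)) := by
  simp only [R4Symbol, LinearMap.map_add, LinearMap.map_sub, taylor_mul, taylor_pow, taylor_X,
    taylor_C]
  simp only [Finset.sum_range_succ, Finset.sum_range_zero, Finset.prod_range_succ,
    Finset.prod_range_zero, rq, quotientCoeff, Q, risingSq, S4Coeff, Polynomial.map_mul,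
    Polynomial.map_add, Polynomial.map_sub, Polynomial.map_neg, Polynomial.map_pow,
    Polynomial.map_X, Polynomial.map_ofNat, Polynomial.map_zero, Polynomial.map_one,
    map_add, map_sub, map_mul, map_pow, map_one, map_ofNat, map_natCast, Nat.cast_ofNat,
    Nat.cast_zero, Nat.cast_one]
  ring

theorem rq_mul_quotient (f : ℚ⟦X⟧) : rq * eulerOp 7 quotientCoeff f = R4op (S4op f) := by
  rw [S4op_apply, R4op_apply, normalOp_eulerOp, ← C_rq_mul_quotient_symbol, normalOp_C_mul,
    ← eulerOp_eq_normalOp, LinearMap.smul_apply, smul_eq_mul]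

theorem constantCoeff_rq_ne_zero : constantCoeff rq ≠ 0 := by
  have numeral (n : ℕ) [n.AtLeastTwo] : constantCoeff (ofNat(n) : ℚ⟦X⟧) = ofNat(n) := map_ofNat _ n
  simp [rq, numeral]

theorem rq_inv_mul_R4op_S4op (f : ℚ⟦X⟧) :
    rq⁻¹ * R4op (S4op f) = eulerOp 7 quotientCoeff f := by
  rw [← rq_mul_quotient, ← mul_assoc, PowerSeries.inv_mul_cancel _ constantCoeff_rq_ne_zero,
    one_mul]

end Symbols

/-- the order-12 operator `P(q,θ)` factors as
`θ² ∘ (θ−1)² ∘ (r(q)⁻¹ ·) ∘ R₄(q,θ) ∘ S₄(q,θ)` on `ℚ[[q]]`. -/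
theorem stmt_2 (f : PowerSeries ℚ) :
    Pop f =
      th (th ((fun g => th g - g) ((fun g => th g - g) (rq⁻¹ * R4op (S4op f))))) := by
  rw [Pop_eq_leftFactor_quotient, ← rq_inv_mul_R4op_S4op]
  exact aeval_leftFactor _

end Stmt2
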